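/- The deterministic zero-rate threshold for online deletions satisfies p0_on,d ≤ 1/(3 − 2·p0_adv). In particular, if p0_adv < 1/2 then p0_on,d < 1/2. -/

import Mathlib

/-! The bound holds because an online channel can defeat any code of positive rate once
`p > 1 / (3 - 2 * p0adv)`. Fix `q > p0adv` with `p * (3 - 2 * q) > 1`, and cut each codeword of
length `n` into a prefix of length `t` and a suffix of length `s = min n (2 * ⌊p n⌋)`. Compare the
number `P` of distinct codeword prefixes with the number of codewords.

* If `4 * P ≤ |C|`, the channel transmits the whole prefix and reduces the suffix to a block of
  `s - ⌊s / 2⌋` copies of a fixed bit `b`. This costs at most `p n` deletions on every word whose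
  suffix has `b` as a weak majority bit, and for one choice of `b` these are at least half of the
  code. The output depends on the prefix only, so at most `P` of these words are decoded correctly
  (`majority_attack`).
* If `4 * P > |C|`, choose one codeword for each prefix. Among these representatives the prefix
  reveals the suffix, so the channel deletes the prefix and then acts as an adversary who knows the
  suffix. Since `q` exceeds the adversarial threshold, all but a few representatives can be grouped
  into pairs whose suffixes have a common subsequence of length at least `(1 - q) * s`, and this is
  at least `(1 - p) * n` by the choice of `q`. Sending that subsequence for both members of a pair
  makes the decoder fail on one of them (`exists_pairing`, `pairing_attack`).

Either way a constant fraction of the code is decoded wrongly. The deletion budget on words outside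
the targeted set is enforced by `exists_capped`. -/

open scoped Classical

/-- `advGood p` : there is a rate `δ > 0` such that for infinitely many `n` there is a
code `C ⊆ {0,1}^n` of size at least `2^{δn}` in which every two distinct codewords
have longest common subsequence of length less than `(1−p)n`. -/
def advGood (p : ℝ) : Prop :=
  ∃ δ : ℝ, 0 < δ ∧ ∀ n₀ : ℕ, ∃ n ≥ n₀, ∃ C : Finset (List Bool),
    (∀ c ∈ C, c.length = n) ∧ (C.card : ℝ) ≥ 2 ^ (δ * n) ∧
    ∀ x ∈ C, ∀ y ∈ C, x ≠ y →
      ∀ z : List Bool, z.Sublist x → z.Sublist y → (z.length : ℝ) < (1 - p) * n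

/-- The zero-rate threshold for adversarial deletions. -/
noncomputable def p0adv : ℝ := sSup {p : ℝ | p ∈ Set.Icc (0 : ℝ) 1 ∧ advGood p}

/-- The output of the deterministic online deletion channel described by `f` on input
`x`: bit `x_i` is transmitted iff `f` applied to the prefix `x_1…x_i` returns `true`. -/
def onlineOutput (f : List Bool → Bool) (x : List Bool) : List Bool :=
  (List.range x.length).filterMap
    (fun i => if f (x.take (i + 1)) then some (x.getD i false) else none)

/-- The online channel `f` deletes at most `pn` bits on every input of length `n`. -/
def deletesAtMost (f : List Bool → Bool) (n : ℕ) (p : ℝ) : Prop :=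
  ∀ x : List Bool, x.length = n → ((n - (onlineOutput f x).length : ℕ) : ℝ) ≤ p * n

/-- `onGood p` : there is a rate `δ > 0` such that for every `ε > 0` there are
infinitely many `n` admitting a code `C ⊆ {0,1}^n` of size at least `2^{δn}` and a
decoder `Dec` into `C` such that every deterministic online deletion channel deleting
at most `pn` bits on every input miscommunicates at most `ε|C|` codewords. -/
def onGood (p : ℝ) : Prop :=
  ∃ δ : ℝ, 0 < δ ∧ ∀ ε : ℝ, 0 < ε → ∀ n₀ : ℕ, ∃ n ≥ n₀, ∃ C : Finset (List Bool),
    (∀ c ∈ C, c.length = n) ∧ (C.card : ℝ) ≥ 2 ^ (δ * n) ∧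
    ∃ Dec : List Bool → List Bool, (∀ s, Dec s ∈ C) ∧
      ∀ f : List Bool → Bool, deletesAtMost f n p →
        ((C.filter (fun c => Dec (onlineOutput f c) ≠ c)).card : ℝ) ≤ ε * C.card

/-- The deterministic zero-rate threshold for online deletions. -/
noncomputable def p0ond : ℝ := sSup {p : ℝ | p ∈ Set.Icc (0 : ℝ) 1 ∧ onGood p}

/-! ### Online channels -/

lemma onlineOutput_nil (f : List Bool → Bool) : onlineOutput f [] = [] := by
  simp [onlineOutput]

lemma onlineOutput_congr {f g : List Bool → Bool} {x : List Bool}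
    (h : ∀ u, u ≠ [] → u.length ≤ x.length → f u = g u) :
    onlineOutput f x = onlineOutput g x := by
  unfold onlineOutput
  apply List.filterMap_congr
  intro i hi
  have hi' : i < x.length := List.mem_range.1 hi
  rw [h (x.take (i + 1))]
  · intro h0
    have := congrArg List.length h0
    rw [List.length_take, List.length_nil] at this
    omega
  · simp

lemma onlineOutput_concat (f : List Bool → Bool) (x : List Bool) (a : Bool) :
    onlineOutput f (x ++ [a]) = onlineOutput f x ++ if f (x ++ [a]) then [a] else [] := by
  unfold onlineOutput
  rw [List.length_append, List.length_singleton, List.range_succ, List.filterMap_append]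
  congr 1
  · apply List.filterMap_congr
    intro i hi
    have hi' : i < x.length := List.mem_range.1 hi
    rw [List.take_append_of_le_length (by omega), List.getD_append _ _ _ _ hi']
  · have h1 : (x ++ [a]).take (x.length + 1) = x ++ [a] := List.take_of_length_le (by simp)
    by_cases h : f (x ++ [a]) = true
    · simp [h1, h]
    · simp [h1, h]

lemma onlineOutput_append (f : List Bool → Bool) (w v : List Bool) :
    onlineOutput f (w ++ v) = onlineOutput f w ++ onlineOutput (fun u => f (w ++ u)) v := by
  induction v using List.reverseRecOn with
  | nil => simp [onlineOutput_nil]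
  | append_singleton v a ih =>
    rw [← List.append_assoc, onlineOutput_concat, ih, onlineOutput_concat]
    simp [List.append_assoc]

lemma onlineOutput_const (β : Bool) (x : List Bool) :
    onlineOutput (fun _ => β) x = if β then x else [] := by
  induction x using List.reverseRecOn with
  | nil => simp [onlineOutput_nil]
  | append_singleton x a ih =>
    rw [onlineOutput_concat, ih]
    cases β <;> simp

/-- Any channel can be stopped once its deletion budget `D` is exhausted, which leaves its output
unchanged on the inputs where it respects the budget. -/
lemma exists_capped (f : List Bool → Bool) (D : ℕ) :
    ∃ g : List Bool → Bool, ∀ x, x.length ≤ (onlineOutput g x).length + D ∧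
      (x.length ≤ (onlineOutput f x).length + D → onlineOutput g x = onlineOutput f x) := by
  refine ⟨fun u => f u || decide ((onlineOutput f u).length + D < u.length), fun x => ?_⟩
  set g : List Bool → Bool :=
    fun u => f u || decide ((onlineOutput f u).length + D < u.length) with hg
  have key : ∀ x : List Bool, (onlineOutput f x).length ≤ (onlineOutput g x).length ∧
      x.length ≤ (onlineOutput g x).length + D ∧
      (x.length ≤ (onlineOutput f x).length + D → onlineOutput g x = onlineOutput f x) := by
    intro x
    induction x using List.reverseRecOn with
    | nil => simp [onlineOutput_nil]
    | append_singleton x a ih =>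
      obtain ⟨h1, h2, h3⟩ := ih
      have hf := onlineOutput_concat f x a
      have hgx := onlineOutput_concat g x a
      have hgv : g (x ++ [a]) = (f (x ++ [a]) ||
        decide ((onlineOutput f (x ++ [a])).length + D < (x ++ [a]).length)) := rfl
      by_cases hfa : f (x ++ [a]) = true
      · rw [hfa, Bool.true_or] at hgv
        rw [hgv] at hgx
        rw [hfa] at hf
        simp only [if_true] at hf hgx
        rw [hf, hgx]
        simp only [List.length_append, List.length_singleton]
        refine ⟨by omega, by omega, fun h => ?_⟩
        rw [h3 (by omega)]
      · simp only [hfa] at hf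
        simp only [Bool.false_eq_true, if_false, List.append_nil] at hf
        by_cases hb : (onlineOutput f (x ++ [a])).length + D < (x ++ [a]).length
        · have hgt : g (x ++ [a]) = true := by rw [hgv, decide_eq_true hb, Bool.or_true]
          rw [hgt] at hgx
          simp only [if_true] at hgx
          rw [hgx]
          refine ⟨?_, ?_, fun h => absurd h (by omega)⟩
          · rw [hf]; simp only [List.length_append, List.length_singleton]; omega
          · simp only [List.length_append, List.length_singleton]; omega
        · have hgt : g (x ++ [a]) = false := by rw [hgv, decide_eq_false hb]; simp [hfa]
          rw [hgt] at hgx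
          simp only [Bool.false_eq_true, if_false, List.append_nil] at hgx
          rw [hf] at hb
          simp only [List.length_append, List.length_singleton] at hb
          rw [hf, hgx]
          simp only [List.length_append, List.length_singleton]
          refine ⟨h1, by omega, fun h => h3 (by omega)⟩
  exact (key x).2

/-- The channel that transmits (`β = true`) or deletes (`β = false`) the first `t` bits, and then
runs the channel `G w` on the rest, where `w` is the prefix read. -/
def twoStage (t : ℕ) (β : Bool) (G : List Bool → List Bool → Bool) (u : List Bool) : Bool :=
  if u.length ≤ t then β else G (u.take t) (u.drop t)

lemma onlineOutput_twoStage {t : ℕ} (β : Bool) (G : List Bool → List Bool → Bool)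
    {w : List Bool} (hw : w.length = t) (v : List Bool) :
    onlineOutput (twoStage t β G) (w ++ v) = (if β then w else []) ++ onlineOutput (G w) v := by
  rw [onlineOutput_append]
  congr 1
  · rw [← onlineOutput_const]
    apply onlineOutput_congr
    intro u _ hu
    simp [twoStage, hw ▸ hu]
  · apply onlineOutput_congr
    intro u hu _
    have : 0 < u.length := List.length_pos_iff.2 hu
    have hn : ¬ (w ++ u).length ≤ t := by simp; omega
    simp only [twoStage, hn, if_false]
    rw [List.take_left' hw, List.drop_left' hw]

/-- The channel that keeps exactly the first `m` occurrences of the bit `b`. -/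
def keepBit (b : Bool) (m : ℕ) (u : List Bool) : Bool :=
  decide (u.getLast? = some b ∧ u.count b ≤ m)

lemma onlineOutput_keepBit (b : Bool) (m : ℕ) (x : List Bool) :
    onlineOutput (keepBit b m) x = List.replicate (min m (x.count b)) b := by
  induction x using List.reverseRecOn with
  | nil => simp [onlineOutput_nil]
  | append_singleton x a ih =>
    rw [onlineOutput_concat, ih]
    by_cases hab : a = b
    · subst hab
      by_cases hm : x.count a + 1 ≤ m
      · have h1 : min m (x.count a) = x.count a := by omega
        have h2 : min m (x.count a + 1) = x.count a + 1 := by omega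
        simp [keepBit, hm, h1, List.replicate_succ']
      · have h1 : min m (x.count a) = m := by omega
        have h2 : min m (x.count a + 1) = m := by omega
        simp [keepBit, hm, h1, h2]
    · simp [keepBit, hab]

/-- A channel with foreknowledge of its input can output any prescribed subsequence, by deciding on
the position alone. -/
lemma exists_mask {z x : List Bool} (h : z.Sublist x) :
    ∃ g : List Bool → Bool, onlineOutput g x = z := by
  suffices ∃ Q : ℕ → Bool, onlineOutput (fun u => Q u.length) x = z from
    let ⟨Q, hQ⟩ := this; ⟨_, hQ⟩
  induction x using List.reverseRecOn generalizing z with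
  | nil => exact ⟨fun _ => true, by simp [onlineOutput_nil, List.sublist_nil.1 h]⟩
  | append_singleton x a ih =>
    obtain ⟨z₁, z₂, rfl, h₁, h₂⟩ := List.sublist_append_iff.1 h
    obtain ⟨Q, hQ⟩ := ih h₁
    refine ⟨fun i => if i ≤ x.length then Q i else decide (z₂ ≠ []), ?_⟩
    rw [onlineOutput_concat]
    congr 1
    · rw [← hQ]
      apply onlineOutput_congr
      intro u _ hu
      simp [hu]
    · rcases List.sublist_singleton.1 h₂ with h | h <;> simp [h]

/-! ### The two attacks -/

/-- The decoder is correct on at most one word per channel output. -/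
lemma card_le_image_add_errors {C S : Finset (List Bool)} (hS : S ⊆ C)
    (Dec out : List Bool → List Bool) :
    S.card ≤ (S.image out).card + (C.filter (fun c => Dec (out c) ≠ c)).card := by
  have h1 : S.card = (S.filter (fun c => Dec (out c) = c)).card +
      (S.filter (fun c => Dec (out c) ≠ c)).card :=
    (Finset.card_filter_add_card_filter_not _).symm
  have h2 : (S.filter (fun c => Dec (out c) = c)).card ≤ (S.image out).card := by
    apply Finset.card_le_card_of_injOn out
    · intro c hc
      exact Finset.mem_coe.2 (Finset.mem_image_of_mem _ (Finset.mem_filter.1 hc).1)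
    · intro c hc d hd hcd
      rw [← (Finset.mem_filter.1 hc).2, ← (Finset.mem_filter.1 hd).2, hcd]
  have h3 : (S.filter (fun c => Dec (out c) ≠ c)).card ≤
      (C.filter (fun c => Dec (out c) ≠ c)).card :=
    Finset.card_le_card (Finset.filter_subset_filter _ hS)
  omega

/-- Transmitting the prefix of length `t` and compressing the rest to a block of majority bits
defeats a code that has few prefixes. -/
lemma majority_attack {C : Finset (List Bool)} {t s D : ℕ}
    (hC : ∀ c ∈ C, c.length = t + s) (hD : s ≤ 2 * D) (Dec : List Bool → List Bool) :
    ∃ f : List Bool → Bool, (∀ x, x.length ≤ (onlineOutput f x).length + D) ∧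
      C.card ≤ 2 * ((C.image (List.take t)).card +
        (C.filter (fun c => Dec (onlineOutput f c) ≠ c)).card) := by
  set m := s - s / 2 with hm
  set S : Bool → Finset (List Bool) := fun b => C.filter (fun c => m ≤ (c.drop t).count b)
  have hsplit : C.card ≤ (S true).card + (S false).card := by
    refine le_trans (Finset.card_le_card ?_) (Finset.card_union_le _ _)
    intro c hc
    have hl : (c.drop t).length = s := by simp [hC c hc]
    have := List.count_true_add_count_false (c.drop t)
    simp only [S, Finset.mem_union, Finset.mem_filter, hc, true_and]
    omega
  obtain ⟨b, hb⟩ : ∃ b, C.card ≤ 2 * (S b).card := by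
    by_contra! h
    have h1 := h true
    have h2 := h false
    omega
  obtain ⟨f, hf⟩ := exists_capped (twoStage t true (fun _ => keepBit b m)) D
  refine ⟨f, fun x => (hf x).1, hb.trans ?_⟩
  have hout : ∀ c ∈ S b, onlineOutput f c = c.take t ++ List.replicate m b := by
    intro c hc
    obtain ⟨hcC, hcm⟩ := Finset.mem_filter.1 hc
    have hlen := hC c hcC
    have h := onlineOutput_twoStage true (fun _ => keepBit b m)
      (w := c.take t) (t := t) (by simp [hlen]) (c.drop t)
    rw [List.take_append_drop, onlineOutput_keepBit, min_eq_left hcm] at h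
    simp only [if_true] at h
    rw [(hf c).2, h]
    rw [h]
    simp [hlen]
    omega
  have himg : ((S b).image (onlineOutput f)).card ≤ (C.image (List.take t)).card := by
    have : (S b).image (onlineOutput f) ⊆
        (C.image (List.take t)).image (fun w => w ++ List.replicate m b) := by
      intro y hy
      obtain ⟨c, hc, rfl⟩ := Finset.mem_image.1 hy
      rw [hout c hc]
      exact Finset.mem_image_of_mem (fun w => w ++ List.replicate m b)
        (Finset.mem_image_of_mem _ (Finset.mem_filter.1 hc).1)
    exact (Finset.card_le_card this).trans Finset.card_image_le
  have := card_le_image_add_errors (C := C) (S := S b) (Finset.filter_subset _ _) Dec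
    (onlineOutput f)
  omega

/-- If every large subset of `R` contains two words whose suffixes share a long subsequence, then
all but `N` words of `R` can be paired, each word being assigned a long subsequence of its suffix
that it shares with its partner. -/
lemma exists_pairing {t L N : ℕ} (R : Finset (List Bool))
    (hR : ∀ T ⊆ R, N ≤ T.card → ∃ x ∈ T, ∃ y ∈ T, x ≠ y ∧ ∃ z : List Bool,
      z.Sublist (x.drop t) ∧ z.Sublist (y.drop t) ∧ L ≤ z.length) :
    ∃ S ⊆ R, ∃ Z : List Bool → List Bool, R.card ≤ S.card + N ∧
      2 * (S.image Z).card ≤ S.card ∧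
      ∀ x ∈ S, (Z x).Sublist (x.drop t) ∧ L ≤ (Z x).length := by
  induction hk : R.card using Nat.strong_induction_on generalizing R with
  | _ k ih =>
  by_cases hN : N ≤ R.card
  · obtain ⟨x, hx, y, hy, hxy, z, hzx, hzy, hz⟩ := hR R subset_rfl hN
    have hsub : R \ {x, y} ⊆ R := Finset.sdiff_subset
    have hpair : ({x, y} : Finset (List Bool)) ⊆ R := by
      intro u hu
      rcases Finset.mem_insert.1 hu with rfl | hu
      · exact hx
      · rwa [Finset.mem_singleton.1 hu]
    have h2 : ({x, y} : Finset (List Bool)).card = 2 := Finset.card_pair hxy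
    have hle := Finset.card_le_card hpair
    have hcard : (R \ {x, y}).card = R.card - 2 := by
      rw [Finset.card_sdiff_of_subset hpair, h2]
    obtain ⟨S, hS, Z, h1, himg, hZ⟩ := ih (R \ {x, y}).card (by omega) (R \ {x, y})
      (fun T hT => hR T (hT.trans hsub)) rfl
    have hdisj : Disjoint S {x, y} :=
      Finset.disjoint_of_subset_left hS Finset.sdiff_disjoint
    have hScard : (S ∪ {x, y}).card = S.card + 2 := by
      rw [Finset.card_union_of_disjoint hdisj, h2]
    refine ⟨S ∪ {x, y}, Finset.union_subset (hS.trans hsub) hpair,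
      fun u => if u ∈ ({x, y} : Finset (List Bool)) then z else Z u, by omega, ?_, ?_⟩
    · have : (S ∪ {x, y}).image
          (fun u => if u ∈ ({x, y} : Finset (List Bool)) then z else Z u) ⊆
          insert z (S.image Z) := by
        intro v hv
        obtain ⟨u, hu, rfl⟩ := Finset.mem_image.1 hv
        by_cases hm : u ∈ ({x, y} : Finset (List Bool))
        · simp only [hm, if_true]; exact Finset.mem_insert_self _ _
        · simp only [hm, if_false]
          exact Finset.mem_insert_of_mem (Finset.mem_image_of_mem _
            ((Finset.mem_union.1 hu).resolve_right hm))
      have := (Finset.card_le_card this).trans (Finset.card_insert_le _ _)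
      omega
    · intro u hu
      by_cases hm : u ∈ ({x, y} : Finset (List Bool))
      · simp only [hm, if_true]
        rcases Finset.mem_insert.1 hm with rfl | hm
        · exact ⟨hzx, hz⟩
        · rw [Finset.mem_singleton.1 hm]; exact ⟨hzy, hz⟩
      · simp only [hm, if_false]
        exact hZ u ((Finset.mem_union.1 hu).resolve_right hm)
  · exact ⟨∅, Finset.empty_subset _, fun _ => [], by simp; omega, by simp, by simp⟩

/-- On a set of codewords determined by their prefixes, deleting the prefix and then sending the
subsequence shared with the partner defeats the decoder on half of the paired words. -/
lemma pairing_attack {C : Finset (List Bool)} {t n D L N : ℕ}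
    (hC : ∀ c ∈ C, c.length = n) (htn : t ≤ n) (hL : n ≤ L + D)
    (hpair : ∀ T ⊆ C, N ≤ T.card → ∃ x ∈ T, ∃ y ∈ T, x ≠ y ∧ ∃ z : List Bool,
      z.Sublist (x.drop t) ∧ z.Sublist (y.drop t) ∧ L ≤ z.length)
    (Dec : List Bool → List Bool) :
    ∃ f : List Bool → Bool, (∀ x, x.length ≤ (onlineOutput f x).length + D) ∧
      (C.image (List.take t)).card ≤
        2 * (C.filter (fun c => Dec (onlineOutput f c) ≠ c)).card + N := by
  obtain ⟨R, hRC, hRinj, hRimg⟩ := Finset.exists_subset_injOn_image_eq_of_surjOn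
    (f := List.take t) (C : Set (List Bool)) (C.image (List.take t))
    (by rw [Finset.coe_image]; exact Set.surjOn_image _ _)
  rw [Finset.coe_subset] at hRC
  have hRcard : R.card = (C.image (List.take t)).card := by
    rw [← hRimg, Finset.card_image_of_injOn hRinj]
  obtain ⟨S, hSR, Z, hScard, hSimg, hZ⟩ :=
    exists_pairing (t := t) (L := L) (N := N) R (fun T hT => hpair T (hT.trans hRC))
  have hmask : ∀ w : List Bool, ∃ g : List Bool → Bool,
      ∀ x ∈ S, x.take t = w → onlineOutput g (x.drop t) = Z x := by
    intro w
    by_cases h : ∃ x ∈ S, x.take t = w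
    · obtain ⟨x, hx, rfl⟩ := h
      obtain ⟨g, hg⟩ := exists_mask (hZ x hx).1
      refine ⟨g, fun y hy hxy => ?_⟩
      rw [hRinj (hSR hy) (hSR hx) hxy, hg]
    · exact ⟨fun _ => true, fun x hx hxw => absurd ⟨x, hx, hxw⟩ h⟩
  choose G hG using hmask
  obtain ⟨f, hf⟩ := exists_capped (twoStage t false G) D
  refine ⟨f, fun x => (hf x).1, ?_⟩
  have hout : ∀ c ∈ S, onlineOutput f c = Z c := by
    intro c hc
    have hlen := hC c (hRC (hSR hc))
    have h := onlineOutput_twoStage false G (w := c.take t) (t := t) (by simp [hlen, htn])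
      (c.drop t)
    rw [List.take_append_drop, hG _ c hc rfl] at h
    simp only [Bool.false_eq_true, if_false, List.nil_append] at h
    have := (hZ c hc).2
    rw [(hf c).2, h]
    rw [h]
    omega
  have himg : S.image (onlineOutput f) = S.image Z := Finset.image_congr hout
  have := card_le_image_add_errors (C := C) (S := S) (hSR.trans hRC) Dec (onlineOutput f)
  rw [himg] at this
  omega

/-! ### The threshold bound -/

lemma p0adv_nonneg : 0 ≤ p0adv := Real.sSup_nonneg (fun _ hp => hp.1.1)

lemma p0adv_le_one : p0adv ≤ 1 := Real.sSup_le (fun _ hp => hp.1.2) zero_le_one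

lemma not_advGood_of_lt {q : ℝ} (hq : p0adv < q) (hq1 : q ≤ 1) : ¬ advGood q := by
  intro h
  have : q ≤ p0adv := le_csSup ⟨1, fun _ hp => hp.1.2⟩ ⟨⟨p0adv_nonneg.trans hq.le, hq1⟩, h⟩
  linarith

/-- Above the adversarial threshold, every large set of words of length `t + s` contains two whose
suffixes of length `s` have a long common subsequence; the suffixes may coincide. -/
lemma exists_common_of_not_advGood {q δ : ℝ} (hq0 : 0 ≤ q) (hδ : 0 < δ) (h : ¬ advGood q) :
    ∃ s₀ : ℕ, ∀ s ≥ s₀, ∀ t : ℕ, ∀ T : Finset (List Bool), (∀ c ∈ T, c.length = t + s) →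
      (2 : ℝ) ^ (δ * s) ≤ T.card → ∃ x ∈ T, ∃ y ∈ T, x ≠ y ∧ ∃ z : List Bool,
        z.Sublist (x.drop t) ∧ z.Sublist (y.drop t) ∧ (1 - q) * s ≤ z.length := by
  unfold advGood at h
  push Not at h
  obtain ⟨s₀, hs₀⟩ := h δ hδ
  refine ⟨s₀, fun s hs t T hT hcard => ?_⟩
  have hlen : ∀ c ∈ T, (c.drop t).length = s := fun c hc => by simp [hT c hc]
  by_cases hinj : Set.InjOn (List.drop t) (T : Set (List Bool))
  · obtain ⟨x', hx', y', hy', hne, z, hzx, hzy, hz⟩ := hs₀ s hs (T.image (List.drop t))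
      (by
        intro c hc
        obtain ⟨d, hd, rfl⟩ := Finset.mem_image.1 hc
        exact hlen d hd)
      (by rw [Finset.card_image_of_injOn hinj]; exact hcard)
    obtain ⟨x, hx, rfl⟩ := Finset.mem_image.1 hx'
    obtain ⟨y, hy, rfl⟩ := Finset.mem_image.1 hy'
    exact ⟨x, hx, y, hy, fun e => hne (by rw [e]), z, hzx, hzy, hz⟩
  · simp only [Set.InjOn] at hinj
    push Not at hinj
    obtain ⟨x, hx, y, hy, hxy, hne⟩ := hinj
    refine ⟨x, hx, y, hy, hne, x.drop t, List.Sublist.refl _, hxy ▸ List.Sublist.refl _, ?_⟩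
    rw [hlen x hx]
    have : (0 : ℝ) ≤ s := Nat.cast_nonneg s
    nlinarith

lemma deletesAtMost_of_floor {f : List Bool → Bool} {n : ℕ} {p : ℝ} (hp : 0 ≤ p)
    (h : ∀ x, x.length ≤ (onlineOutput f x).length + ⌊p * n⌋₊) : deletesAtMost f n p := by
  intro x hx
  have h1 := h x
  have h2 : n - (onlineOutput f x).length ≤ ⌊p * n⌋₊ := by omega
  have hpn : 0 ≤ p * n := by positivity
  exact (Nat.cast_le.2 h2).trans (Nat.floor_le hpn)

lemma not_onGood {p q : ℝ} (hp : 0 < p) (hq0 : 0 ≤ q) (hq1 : q ≤ 1)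
    (hpq : 1 < p * (3 - 2 * q)) (hq : ¬ advGood q) : ¬ onGood p := by
  rintro ⟨δ, hδ, h⟩
  obtain ⟨s₀, hs₀⟩ := exists_common_of_not_advGood hq0 (half_pos hδ) hq
  set η := p * (3 - 2 * q) - 1 with hη
  have hηpos : 0 < η := by linarith
  -- `n` is large enough for `s ≥ s₀`, for `η * n ≥ 2`, and for `2 ^ (δ * n / 2) ≥ 16`.
  obtain ⟨n, hn, C, hClen, hCcard, Dec, -, hDec⟩ := h (1 / 20) (by norm_num)
    (max (max s₀ ⌈(s₀ + 2) / (2 * p)⌉₊) (max ⌈2 / η⌉₊ ⌈8 / δ⌉₊))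
  simp only [ge_iff_le, max_le_iff] at hn
  obtain ⟨⟨hn0, hn1⟩, hn2, hn3⟩ := hn
  have hn1' : (s₀ : ℝ) + 2 ≤ n * (2 * p) := (div_le_iff₀ (by positivity)).1 (Nat.ceil_le.1 hn1)
  have hn2' : 2 ≤ n * η := (div_le_iff₀ hηpos).1 (Nat.ceil_le.1 hn2)
  have hn3' : 8 ≤ n * δ := (div_le_iff₀ hδ).1 (Nat.ceil_le.1 hn3)
  set X : ℝ := 2 ^ (δ / 2 * n) with hX
  have hX16 : 16 ≤ X := by
    have : (2 : ℝ) ^ (4 : ℝ) ≤ X := Real.rpow_le_rpow_of_exponent_le (by norm_num) (by linarith)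
    have h16 : (2 : ℝ) ^ (4 : ℝ) = 16 := by
      rw [show (4 : ℝ) = ((4 : ℕ) : ℝ) by norm_num, Real.rpow_natCast]; norm_num
    linarith
  have hXX : X * X ≤ C.card := by
    rw [hX, ← Real.rpow_add (by norm_num)]
    refine le_trans (le_of_eq ?_) hCcard
    congr 1; ring
  have hCbig : 8 * X + 8 ≤ C.card := by nlinarith
  set D := ⌊p * n⌋₊ with hD
  have hDlt : p * n < D + 1 := Nat.lt_floor_add_one _
  set s := min n (2 * D) with hs
  have hsn : s ≤ n := min_le_left _ _
  set t := n - s with ht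
  have hts : t + s = n := by omega
  have hClen' : ∀ c ∈ C, c.length = t + s := fun c hc => by rw [hClen c hc, hts]
  obtain ⟨f, hf, hfC⟩ := majority_attack (D := D) hClen' (min_le_right _ _) Dec
  have hf' := hDec f (deletesAtMost_of_floor hp.le hf)
  have hfC' : (C.card : ℝ) ≤ 2 * ((C.image (List.take t)).card +
      (C.filter (fun c => Dec (onlineOutput f c) ≠ c)).card) := by exact_mod_cast hfC
  have hmany : (C.card : ℝ) / 4 < (C.image (List.take t)).card := by linarith
  -- With an empty prefix there is only one prefix, so the prefix is nonempty here.
  have htpos : 2 * D < n := by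
    by_contra! hle
    have ht0 : t = 0 := by omega
    have : (C.image (List.take t)).card ≤ 1 := by
      apply Finset.card_le_one.2
      intro a ha b hb
      obtain ⟨_, _, rfl⟩ := Finset.mem_image.1 ha
      obtain ⟨_, _, rfl⟩ := Finset.mem_image.1 hb
      simp [ht0]
    have : ((C.image (List.take t)).card : ℝ) ≤ 1 := by exact_mod_cast this
    linarith
  have hs2 : s = 2 * D := by omega
  have hsR : 2 * (p * n) - 2 ≤ (s : ℝ) := by rw [hs2]; push_cast; linarith
  have hss₀ : s₀ ≤ s := by
    have : (s₀ : ℝ) ≤ s := by linarith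
    exact_mod_cast this
  have hlong : (1 - p) * n ≤ (1 - q) * s := by
    have : (1 - q) * (2 * (p * n) - 2) ≤ (1 - q) * s :=
      mul_le_mul_of_nonneg_left hsR (by linarith)
    have e : (1 - q) * (2 * (p * n) - 2) = (1 - p) * n + n * η - 2 + 2 * q := by rw [hη]; ring
    linarith
  obtain ⟨g, hg, hgC⟩ := pairing_attack (t := t) (D := D) (L := n - D) (N := ⌈X⌉₊) hClen
    (by omega) (by omega) (by
      intro T hT hTcard
      obtain ⟨x, hx, y, hy, hne, z, hzx, hzy, hz⟩ := hs₀ s hss₀ t T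
        (fun c hc => hClen' c (hT hc)) (by
          refine le_trans ?_ (Nat.ceil_le.1 hTcard)
          apply Real.rpow_le_rpow_of_exponent_le (by norm_num)
          have : (s : ℝ) ≤ n := by exact_mod_cast hsn
          exact mul_le_mul_of_nonneg_left this (by positivity))
      refine ⟨x, hx, y, hy, hne, z, hzx, hzy, ?_⟩
      have h1 : (n : ℝ) < z.length + D + 1 := by linarith
      have h2 : n < z.length + D + 1 := by exact_mod_cast h1
      omega) Dec
  have hg' := hDec g (deletesAtMost_of_floor hp.le hg)
  have hgC' : ((C.image (List.take t)).card : ℝ) ≤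
      2 * (C.filter (fun c => Dec (onlineOutput g c) ≠ c)).card + ⌈X⌉₊ := by exact_mod_cast hgC
  have hceil : (⌈X⌉₊ : ℝ) < X + 1 := Nat.ceil_lt_add_one (by linarith)
  linarith

lemma p0ond_le : p0ond ≤ 1 / (3 - 2 * p0adv) := by
  have h1 := p0adv_le_one
  have hpos : 0 < 3 - 2 * p0adv := by linarith
  refine Real.sSup_le ?_ (by positivity)
  rintro p ⟨⟨hp0, hp1⟩, hp⟩
  by_contra! hlt
  have hmul : 1 < p * (3 - 2 * p0adv) := (div_lt_iff₀ hpos).1 hlt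
  have hppos : 0 < p := lt_of_lt_of_le (by positivity) hlt.le
  -- The bound is at least `1` when `p0adv = 1`, so `p ≤ 1` forces room between `p0adv` and `1`.
  have ha : p0adv < 1 := by nlinarith
  -- `q` exceeds `p0adv` by at most a quarter of the slack, and `p ≤ 1`.
  set q := min 1 (p0adv + (p * (3 - 2 * p0adv) - 1) / 4) with hq
  have hqa : p0adv < q := lt_min ha (by linarith)
  have hq1 : q ≤ 1 := min_le_left _ _
  have hq2 : q ≤ p0adv + (p * (3 - 2 * p0adv) - 1) / 4 := min_le_right _ _
  refine not_onGood hppos (p0adv_nonneg.trans hqa.le) hq1 ?_ (not_advGood_of_lt hqa hq1) hp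
  nlinarith

/-- `p0_on,d ≤ 1/(3 − 2·p0_adv)`; in particular, if `p0_adv < 1/2` then
`p0_on,d < 1/2`. -/
theorem online_threshold_le :
    p0ond ≤ 1 / (3 - 2 * p0adv) ∧ (p0adv < 1 / 2 → p0ond < 1 / 2) := by
  refine ⟨p0ond_le, fun h => p0ond_le.trans_lt ?_⟩
  exact one_div_lt_one_div_of_lt (by norm_num) (by linarith)
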